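/- Let r ∈ (1,∞) and r̂ := min(r,2). Let ς : [0,∞) → ℝ be continuous, suppose α ↦ α·ς(α) is differentiable on (0,∞), and suppose there exist ς_de ≥ 0 and ς_hc > 0 such that d/dα(α·ς(α)) ≤ ς_hc·(ς_de^r + α^r)^((r−2)/r) for all α > 0. Then there exists a constant C > 0 depending only on r such that for all real numbers α, β with 0 ≤ β ≤ α and (ς_de, α) ≠ (0, 0): α·ς(α) − β·ς(β) ≤ C·ς_hc·(ς_de^r + α^r + β^r)^((r−2)/r)·(α − β). -/

import Mathlib

open Real

/-!
Write `w t = (a + t ^ r) ^ (s / r)`, with `a = ς_de ^ r` and `s = r - 2` in the application.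
If `0 ≤ s`, then `w` is monotone and the mean value inequality already bounds the increment by
`w x * (x - y)`. If `-1 < s ≤ 0`, then `w` is antitone and possibly unbounded near `0`, but
`(t * w t)' = (a + (1 + s) * t ^ r) * (a + t ^ r) ^ (s / r - 1) ≥ (1 + s) * w t`, so that
`t * w t / (1 + s)` is a majorant whose increment over `[y, x]` is at most
`w x * (x - y) / (1 + s)`. Finally `a + x ^ r + y ^ r ≤ 2 * (a + x ^ r)` introduces `y ^ r`
into the weight at the cost of a factor `2 ^ (-(s / r))`.
-/

section

open Set

theorem sub_le_sub_of_deriv_le_deriv {f g : ℝ → ℝ} {x y : ℝ} (hyx : y ≤ x)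
    (hf : ContinuousOn f (Icc y x)) (hf' : DifferentiableOn ℝ f (Ioo y x))
    (hg : ContinuousOn g (Icc y x)) (hg' : DifferentiableOn ℝ g (Ioo y x))
    (hfg : ∀ t ∈ Ioo y x, deriv f t ≤ deriv g t) :
    f x - f y ≤ g x - g y := by
  have anti : AntitoneOn (f - g) (Icc y x) := by
    refine antitoneOn_of_deriv_nonpos (convex_Icc y x) (hf.sub hg) ?_ ?_ <;> rw [interior_Icc]
    · exact hf'.sub hg'
    · intro t ht
      have hnhds := isOpen_Ioo.mem_nhds ht
      rw [deriv_sub (hf'.differentiableAt hnhds) (hg'.differentiableAt hnhds)]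
      exact sub_nonpos.2 (hfg t ht)
  have := anti (left_mem_Icc.2 hyx) (right_mem_Icc.2 hyx) hyx
  simp only [Pi.sub_apply] at this
  linarith

theorem rpow_le_rpow_neg_mul_rpow {k u v p : ℝ} (hk : 0 < k) (hv : 0 < v) (hvu : v ≤ k * u)
    (hp : p ≤ 0) : u ^ p ≤ k ^ (-p) * v ^ p :=
  calc u ^ p ≤ (v / k) ^ p :=
        rpow_le_rpow_of_nonpos (div_pos hv hk) ((div_le_iff₀' hk).2 hvu) hp
    _ = k ^ (-p) * v ^ p := by rw [div_rpow hv.le hk.le, rpow_neg hk.le, div_eq_inv_mul]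

variable {a r s : ℝ}

theorem hasDerivAt_mul_add_rpow_rpow {t : ℝ} (ha : 0 ≤ a) (hr : r ≠ 0) (ht : 0 < t) :
    HasDerivAt (fun t ↦ t * (a + t ^ r) ^ (s / r))
      ((a + (1 + s) * t ^ r) * (a + t ^ r) ^ (s / r - 1)) t := by
  have hpos : 0 < a + t ^ r := by positivity
  have hbase : HasDerivAt (fun t ↦ a + t ^ r) (r * t ^ (r - 1)) t :=
    (hasDerivAt_rpow_const (Or.inl ht.ne')).const_add a
  refine ((hasDerivAt_id t).mul (hbase.rpow_const (p := s / r) (Or.inl hpos.ne'))).congr_deriv ?_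
  rw [rpow_sub_one ht.ne', rpow_sub_one hpos.ne', id]
  field_simp
  ring

theorem one_add_mul_add_rpow_rpow_le {t : ℝ} (ha : 0 ≤ a) (hs : s ≤ 0) (ht : 0 < t) :
    (1 + s) * (a + t ^ r) ^ (s / r) ≤
      (a + (1 + s) * t ^ r) * (a + t ^ r) ^ (s / r - 1) := by
  have hpos : 0 < a + t ^ r := by positivity
  calc (1 + s) * (a + t ^ r) ^ (s / r)
      = ((1 + s) * (a + t ^ r)) * (a + t ^ r) ^ (s / r - 1) := by
        rw [rpow_sub_one hpos.ne']
        field_simp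
    _ ≤ (a + (1 + s) * t ^ r) * (a + t ^ r) ^ (s / r - 1) := by
        gcongr
        linarith [mul_nonpos_of_nonpos_of_nonneg hs ha]

theorem continuousOn_mul_add_rpow_rpow (ha : 0 ≤ a) (hr : 0 < r) (hs : -1 < s) :
    ContinuousOn (fun t ↦ t * (a + t ^ r) ^ (s / r)) (Ici 0) := by
  rcases ha.eq_or_lt with rfl | ha
  · have heq : EqOn (fun t : ℝ ↦ t * (0 + t ^ r) ^ (s / r)) (fun t ↦ t ^ (1 + s)) (Ici 0) := by
      intro t ht
      simp only [zero_add]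
      rw [← rpow_mul ht, mul_div_cancel₀ _ hr.ne', rpow_one_add' ht (by linarith)]
    exact (continuousOn_id.rpow_const fun _ _ ↦ Or.inr (by linarith)).congr heq
  · have hbase : ContinuousOn (fun t ↦ a + t ^ r) (Ici 0) :=
      continuousOn_const.add (continuousOn_id.rpow_const fun _ _ ↦ Or.inr hr.le)
    refine continuousOn_id.mul (hbase.rpow_const fun t ht ↦ Or.inl ?_)
    have : 0 ≤ t ^ r := rpow_nonneg ht r
    positivity

theorem mul_add_rpow_rpow_sub_le {x y : ℝ} (ha : 0 ≤ a) (hr : 0 < r) (hs : s ≤ 0) (hy : 0 ≤ y)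
    (hyx : y ≤ x) :
    x * (a + x ^ r) ^ (s / r) - y * (a + y ^ r) ^ (s / r) ≤
      (a + x ^ r) ^ (s / r) * (x - y) := by
  have hweight : y * (a + x ^ r) ^ (s / r) ≤ y * (a + y ^ r) ^ (s / r) := by
    rcases hy.eq_or_lt with rfl | hy
    · simp only [zero_mul, le_refl]
    · gcongr ?_ * ?_
      exact rpow_le_rpow_of_nonpos (by positivity) (by gcongr)
        (div_nonpos_of_nonpos_of_nonneg hs hr.le)
  linarith

variable {f : ℝ → ℝ} {c x y : ℝ}

theorem sub_le_of_deriv_le_add_rpow_rpow_of_nonneg (ha : 0 ≤ a) (hr : 0 < r) (hs : 0 ≤ s)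
    (hc : 0 ≤ c) (hy : 0 ≤ y) (hyx : y ≤ x)
    (hf : ContinuousOn f (Icc y x)) (hf' : DifferentiableOn ℝ f (Ioo y x))
    (hle : ∀ t ∈ Ioo y x, deriv f t ≤ c * (a + t ^ r) ^ (s / r)) :
    f x - f y ≤ c * (a + x ^ r) ^ (s / r) * (x - y) := by
  refine (convex_Icc y x).image_sub_le_mul_sub_of_deriv_le hf ?_ ?_
    y (left_mem_Icc.2 hyx) x (right_mem_Icc.2 hyx) hyx <;> rw [interior_Icc]
  · exact hf'
  · intro t ht
    have ht0 : 0 < t := hy.trans_lt ht.1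
    calc deriv f t ≤ c * (a + t ^ r) ^ (s / r) := hle t ht
      _ ≤ c * (a + x ^ r) ^ (s / r) := by
        gcongr
        exact ht.2.le

theorem sub_le_of_deriv_le_add_rpow_rpow_of_nonpos (ha : 0 ≤ a) (hr : 0 < r) (hs : -1 < s)
    (hs0 : s ≤ 0) (hc : 0 ≤ c) (hy : 0 ≤ y) (hyx : y ≤ x)
    (hf : ContinuousOn f (Icc y x)) (hf' : DifferentiableOn ℝ f (Ioo y x))
    (hle : ∀ t ∈ Ioo y x, deriv f t ≤ c * (a + t ^ r) ^ (s / r)) :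
    f x - f y ≤ c / (1 + s) * (a + x ^ r) ^ (s / r) * (x - y) := by
  have hs1 : 0 < 1 + s := by linarith
  set g : ℝ → ℝ := fun t ↦ c / (1 + s) * (t * (a + t ^ r) ^ (s / r))
  have hg_cont : ContinuousOn g (Icc y x) :=
    continuousOn_const.mul <|
      (continuousOn_mul_add_rpow_rpow ha hr hs).mono fun _ ht ↦ hy.trans ht.1
  have hg_deriv : ∀ t ∈ Ioo y x, HasDerivAt g
      (c / (1 + s) * ((a + (1 + s) * t ^ r) * (a + t ^ r) ^ (s / r - 1))) t := fun t ht ↦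
    (hasDerivAt_mul_add_rpow_rpow ha hr.ne' (hy.trans_lt ht.1)).const_mul _
  have hfg : ∀ t ∈ Ioo y x, deriv f t ≤ deriv g t := fun t ht ↦
    calc deriv f t ≤ c * (a + t ^ r) ^ (s / r) := hle t ht
      _ = c / (1 + s) * ((1 + s) * (a + t ^ r) ^ (s / r)) := by field_simp
      _ ≤ c / (1 + s) * ((a + (1 + s) * t ^ r) * (a + t ^ r) ^ (s / r - 1)) := by
        gcongr ?_ * ?_
        exact one_add_mul_add_rpow_rpow_le ha hs0 (hy.trans_lt ht.1)
      _ = deriv g t := (hg_deriv t ht).deriv.symm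
  calc f x - f y ≤ g x - g y :=
        sub_le_sub_of_deriv_le_deriv hyx hf hf' hg_cont
          (fun t ht ↦ (hg_deriv t ht).differentiableAt.differentiableWithinAt) hfg
    _ = c / (1 + s) * (x * (a + x ^ r) ^ (s / r) - y * (a + y ^ r) ^ (s / r)) :=
        (mul_sub _ _ _).symm
    _ ≤ c / (1 + s) * ((a + x ^ r) ^ (s / r) * (x - y)) := by
        gcongr ?_ * ?_
        exact mul_add_rpow_rpow_sub_le ha hr hs0 hy hyx
    _ = c / (1 + s) * (a + x ^ r) ^ (s / r) * (x - y) := (mul_assoc _ _ _).symm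

theorem stmt3_general {r s : ℝ} (hr : 0 < r) (hs : -1 < s) :
    ∃ C : ℝ, 0 < C ∧
      ∀ (f : ℝ → ℝ) (a c x y : ℝ), 0 ≤ a → 0 ≤ c → 0 ≤ y → y ≤ x →
        ContinuousOn f (Icc y x) → DifferentiableOn ℝ f (Ioo y x) →
        (∀ t ∈ Ioo y x, deriv f t ≤ c * (a + t ^ r) ^ (s / r)) →
        f x - f y ≤ C * c * (a + x ^ r + y ^ r) ^ (s / r) * (x - y) := by
  rcases le_total 0 s with hs0 | hs0
  · refine ⟨1, one_pos, fun f a c x y ha hc hy hyx hf hf' hle ↦ ?_⟩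
    have hx : 0 ≤ x := hy.trans hyx
    calc f x - f y ≤ c * (a + x ^ r) ^ (s / r) * (x - y) :=
          sub_le_of_deriv_le_add_rpow_rpow_of_nonneg ha hr hs0 hc hy hyx hf hf' hle
      _ ≤ 1 * c * (a + x ^ r + y ^ r) ^ (s / r) * (x - y) := by
          rw [one_mul]
          gcongr ?_ * ?_ ^ _ * ?_
          exact le_add_of_nonneg_right (rpow_nonneg hy r)
  · have hs1 : 0 < 1 + s := by linarith
    refine ⟨2 ^ (-(s / r)) / (1 + s), by positivity, fun f a c x y ha hc hy hyx hf hf' hle ↦ ?_⟩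
    rcases hyx.eq_or_lt with rfl | hlt
    · simp only [sub_self, mul_zero, le_refl]
    have hx : 0 < x := hy.trans_lt hlt
    have hyr : y ^ r ≤ x ^ r := by gcongr
    have hweight : (a + x ^ r) ^ (s / r) ≤ 2 ^ (-(s / r)) * (a + x ^ r + y ^ r) ^ (s / r) :=
      rpow_le_rpow_neg_mul_rpow two_pos (by positivity) (by linarith)
        (div_nonpos_of_nonpos_of_nonneg hs0 hr.le)
    calc f x - f y ≤ c / (1 + s) * (a + x ^ r) ^ (s / r) * (x - y) :=
          sub_le_of_deriv_le_add_rpow_rpow_of_nonpos ha hr hs hs0 hc hy hyx hf hf' hle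
      _ ≤ c / (1 + s) * (2 ^ (-(s / r)) * (a + x ^ r + y ^ r) ^ (s / r)) * (x - y) := by
          gcongr
      _ = 2 ^ (-(s / r)) / (1 + s) * c * (a + x ^ r + y ^ r) ^ (s / r) * (x - y) := by ring

end

/-- One-dimensional upper bound (A.6): if `α ↦ α ς(α)` has derivative bounded
above by `ς_hc (ς_de^r + α^r)^((r-2)/r)` on `(0,∞)`, then for `0 ≤ β ≤ α`
(excluding the degenerate case `ς_de = α = 0`) one has
`α ς(α) - β ς(β) ≤ C ς_hc (ς_de^r + α^r + β^r)^((r-2)/r) (α - β)`, with `C`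
depending only on `r`. -/
theorem stmt3 (r : ℝ) (hr : 1 < r) :
    ∃ C : ℝ, 0 < C ∧
      ∀ (ς : ℝ → ℝ) (ς_de ς_hc : ℝ),
        ContinuousOn ς (Set.Ici 0) →
        (∀ α : ℝ, 0 < α → DifferentiableAt ℝ (fun t : ℝ => t * ς t) α) →
        0 ≤ ς_de → 0 < ς_hc →
        (∀ α : ℝ, 0 < α →
          deriv (fun t : ℝ => t * ς t) α ≤ ς_hc * (ς_de ^ r + α ^ r) ^ ((r - 2) / r)) →
        ∀ α β : ℝ, 0 ≤ β → β ≤ α → ¬(ς_de = 0 ∧ α = 0) →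
          α * ς α - β * ς β ≤
            C * ς_hc * (ς_de ^ r + α ^ r + β ^ r) ^ ((r - 2) / r) * (α - β) := by
  obtain ⟨C, hC, hbound⟩ := stmt3_general (r := r) (s := r - 2) (by linarith) (by linarith)
  refine ⟨C, hC, fun ς ς_de ς_hc hς hdiff hde hhc hderiv α β hβ hβα _ ↦ ?_⟩
  exact hbound (fun t ↦ t * ς t) (ς_de ^ r) ς_hc α β (rpow_nonneg hde r) hhc.le hβ hβα
    ((continuousOn_id.mul hς).mono fun _ ht ↦ hβ.trans ht.1)
    (fun t ht ↦ (hdiff t (hβ.trans_lt ht.1)).differentiableWithinAt)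
    fun t ht ↦ hderiv t (hβ.trans_lt ht.1)
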